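/- arXiv:1809.08818 — 2 statements merged into one kernel-verified Lean document; each statement's English description precedes it below -/
import Mathlib

section
/- Let d ≥ 1 and let g_min, K_min, B > 0. Then there exist λ > 0 and c₀ > 0, depending only on g_min, K_min, B and d, such that the following holds for every open set 𝒪 ⊆ ℝ^d: if f : 𝒪 → ℝ is continuously differentiable with K_min ≤ f(x) ≤ B and ‖∇f(x)‖ ≤ B for all x ∈ 𝒪, and u : 𝒪 → ℝ is twice continuously differentiable with |Δu(x)| ≤ B for all x ∈ 𝒪, and f(x)Δu(x) + ⟨∇f(x), ∇u(x)⟩ ≥ g_min for all x ∈ 𝒪, then (1/2)Δu(x) + λ‖∇u(x)‖² ≥ c₀ for all x ∈ 𝒪. -/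
open scoped RealInnerProductSpace

/-- The Laplacian `Δu(x)`, the trace of the second derivative. -/
noncomputable def lap (d : ℕ) (u : EuclideanSpace ℝ (Fin d) → ℝ)
    (x : EuclideanSpace ℝ (Fin d)) : ℝ :=
  ∑ i : Fin d, iteratedFDeriv ℝ 2 u x ![EuclideanSpace.single i 1, EuclideanSpace.single i 1]

/-- If `F * L + B * p` is at least `g`, with `F` between `K` and `B`, then `L / 2` plus a multiple of
`p ^ 2` is bounded below by a positive constant. -/
theorem div_le_half_add_mul_sq {g K B F L p : ℝ} (hg : 0 < g) (hK : 0 < K) (hB : 0 < B)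
    (hKF : K ≤ F) (hFB : F ≤ B) (h : g ≤ F * L + B * p) :
    g / (4 * B) ≤ 1 / 2 * L + B ^ 2 / (4 * g * K) * p ^ 2 := by
  have hF : 0 < F := hK.trans_le hKF
  have young : B * p ≤ g / 2 + B ^ 2 / (2 * g) * p ^ 2 := by
    have key : g / 2 + B ^ 2 / (2 * g) * p ^ 2 - B * p = (g - B * p) ^ 2 / (2 * g) := by
      field_simp
      ring
    have : 0 ≤ (g - B * p) ^ 2 / (2 * g) := by positivity
    linarith
  have upper : F * (g / (4 * B)) ≤ g / 4 := by
    calc F * (g / (4 * B)) ≤ B * (g / (4 * B)) := by gcongr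
      _ = g / 4 := by field_simp
  have lower : B ^ 2 / (4 * g) * p ^ 2 ≤ F * (B ^ 2 / (4 * g * K) * p ^ 2) := by
    calc B ^ 2 / (4 * g) * p ^ 2 = K * (B ^ 2 / (4 * g * K) * p ^ 2) := by field_simp
      _ ≤ F * (B ^ 2 / (4 * g * K) * p ^ 2) := by gcongr
  have half : B ^ 2 / (2 * g) * p ^ 2 = 2 * (B ^ 2 / (4 * g) * p ^ 2) := by
    field_simp
    ring
  refine le_of_mul_le_mul_left ?_ hF
  linarith

theorem pointwise_positivity_estimate (d : ℕ) (hd : 1 ≤ d)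
    (gmin Kmin B : ℝ) (hg : 0 < gmin) (hK : 0 < Kmin) (hB : 0 < B) :
    ∃ lam c₀ : ℝ, 0 < lam ∧ 0 < c₀ ∧
      ∀ O : Set (EuclideanSpace ℝ (Fin d)), IsOpen O →
      ∀ f u : EuclideanSpace ℝ (Fin d) → ℝ,
        ContDiffOn ℝ 1 f O →
        (∀ x ∈ O, Kmin ≤ f x ∧ f x ≤ B ∧ ‖gradient f x‖ ≤ B) →
        ContDiffOn ℝ 2 u O →
        (∀ x ∈ O, |lap d u x| ≤ B) →
        (∀ x ∈ O, gmin ≤ f x * lap d u x + ⟪gradient f x, gradient u x⟫) →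
        ∀ x ∈ O, c₀ ≤ (1 / 2) * lap d u x + lam * ‖gradient u x‖ ^ 2 := by
  refine ⟨B ^ 2 / (4 * gmin * Kmin), gmin / (4 * B), by positivity, by positivity, ?_⟩
  intro O _ f u _ hf _ _ hfu x hx
  obtain ⟨hKf, hfB, hgrad⟩ := hf x hx
  refine div_le_half_add_mul_sq hg hK hB hKf hfB ((hfu x hx).trans ?_)
  gcongr
  exact (real_inner_le_norm _ _).trans (by gcongr)
end

section
/- Let d ≥ 1 and let 𝒪 ⊆ ℝ^d be a bounded nonempty open set with smooth boundary. Then there exists a constant c > 0 depending only on 𝒪 and d such that the following holds: for every continuous bounded f : 𝒪̄ → ℝ with f ≥ 0, every g_min > 0, every continuous g : ∂𝒪 → ℝ with g(x) ≥ g_min for all x ∈ ∂𝒪, and every classical solution u of Δu = 2fu on 𝒪 with u = g on ∂𝒪, one has inf_{x∈𝒪} u(x) ≥ g_min · exp(−c · sup_{x∈𝒪}|f(x)|); in particular u > 0 on 𝒪. -/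
open MeasureTheory

/-- `O` has smooth boundary: there is a smooth defining function `ρ` with
`O = {ρ < 0}`, `∂O = {ρ = 0}` and `∇ρ ≠ 0` on `∂O`. -/
def HasSmoothBoundary (d : ℕ) (O : Set (EuclideanSpace ℝ (Fin d))) : Prop :=
  ∃ ρ : EuclideanSpace ℝ (Fin d) → ℝ, ContDiff ℝ (⊤ : ℕ∞) ρ ∧
    O = {x | ρ x < 0} ∧ frontier O = {x | ρ x = 0} ∧
    ∀ x ∈ frontier O, fderiv ℝ ρ x ≠ 0

/-- Classical solution of `Δu = 2fu` on `O` with boundary values `u = g` on `∂O`: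
a function `u ∈ C²(O) ∩ C(O̅)` with `Δu − 2fu = 0` pointwise on `O` and `u = g`
on the boundary. -/
def IsSolutionSchrBVP (d : ℕ) (O : Set (EuclideanSpace ℝ (Fin d)))
    (f g u : EuclideanSpace ℝ (Fin d) → ℝ) : Prop :=
  ContDiffOn ℝ 2 u O ∧ ContinuousOn u (closure O) ∧
    (∀ x ∈ O, lap d u x - 2 * f x * u x = 0) ∧
    ∀ x ∈ frontier O, u x = g x

open Filter Topology

/-- Second-order necessary condition at a local minimum of a function of one real variable. -/
theorem IsLocalMin.second_derivative_nonneg {h h' : ℝ → ℝ} {a s : ℝ} (hmin : IsLocalMin h a)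
    (hh : ∀ᶠ t in 𝓝 a, HasDerivAt h (h' t) t) (hh' : HasDerivAt h' s a) : 0 ≤ s := by
  have hderiv : deriv h =ᶠ[𝓝 a] h' := hh.mono fun t ht => ht.deriv
  have hs : deriv (deriv h) a = s := hderiv.deriv_eq.trans hh'.deriv
  by_contra! hneg
  have hmax : IsLocalMax h a := isLocalMax_of_deriv_deriv_neg (hs ▸ hneg) hmin.deriv_eq_zero
    hh.self_of_nhds.continuousAt
  have hconst : h =ᶠ[𝓝 a] fun _ => h a := by
    filter_upwards [hmin, hmax] with t h₁ h₂ using le_antisymm h₂ h₁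
  have hzero : deriv (deriv h) a = 0 := by
    rw [hconst.deriv.deriv_eq]
    simp
  linarith

section Line

variable {E : Type*} [NormedAddCommGroup E] [NormedSpace ℝ E] {u : E → ℝ} {x : E}

theorem hasDerivAt_add_smul (x e : E) (t : ℝ) : HasDerivAt (fun t : ℝ => x + t • e) e t := by
  simpa using ((hasDerivAt_id t).smul_const e).const_add x

theorem tendsto_add_smul_nhds_zero (x e : E) :
    Tendsto (fun t : ℝ => x + t • e) (𝓝 0) (𝓝 x) := by
  simpa using (hasDerivAt_add_smul x e 0).continuousAt.tendsto

theorem ContDiffAt.eventually_hasDerivAt_line (hu : ContDiffAt ℝ 2 u x) (e : E) :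
    ∀ᶠ t in 𝓝 (0 : ℝ),
      HasDerivAt (fun t : ℝ => u (x + t • e)) (fderiv ℝ u (x + t • e) e) t := by
  have hev : ∀ᶠ y in 𝓝 x, ContDiffAt ℝ 2 u y := hu.eventually (by simp)
  filter_upwards [(tendsto_add_smul_nhds_zero x e).eventually hev] with t ht
  exact (ht.differentiableAt (by simp)).hasFDerivAt.comp_hasDerivAt t (hasDerivAt_add_smul x e t)

theorem ContDiffAt.hasDerivAt_fderiv_line (hu : ContDiffAt ℝ 2 u x) (e : E) :
    HasDerivAt (fun t : ℝ => fderiv ℝ u (x + t • e) e) (iteratedFDeriv ℝ 2 u x ![e, e]) 0 := by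
  have hd : DifferentiableAt ℝ (fderiv ℝ u) (x + (0 : ℝ) • e) := by
    simpa using (hu.fderiv_right (m := 1) (by norm_num)).differentiableAt (by simp)
  have hline : HasDerivAt (fun t : ℝ => fderiv ℝ u (x + t • e))
      (fderiv ℝ (fderiv ℝ u) (x + (0 : ℝ) • e) e) 0 :=
    hd.hasFDerivAt.comp_hasDerivAt (0 : ℝ) (hasDerivAt_add_smul x e 0)
  have happly := hline.clm_apply (hasDerivAt_const (0 : ℝ) e)
  rw [zero_smul, add_zero, map_zero, add_zero] at happly
  rw [iteratedFDeriv_two_apply]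
  exact happly

end Line

theorem hasDerivAt_exp_quadratic (C N q p t : ℝ) :
    HasDerivAt (fun t => C * Real.exp (N * (q + 2 * t * p + t ^ 2)))
      (C * Real.exp (N * (q + 2 * t * p + t ^ 2)) * (N * (2 * p + 2 * t))) t := by
  have hpoly : HasDerivAt (fun t : ℝ => N * (q + 2 * t * p + t ^ 2)) (N * (2 * p + 2 * t)) t := by
    have h₁ : HasDerivAt (fun t : ℝ => 2 * t * p) (2 * p) t := by
      simpa using ((hasDerivAt_id t).const_mul 2).mul_const p
    have h₂ : HasDerivAt (fun t : ℝ => t ^ 2) (2 * t) t := by simpa using hasDerivAt_pow 2 t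
    exact ((h₁.const_add q).add h₂).const_mul N
  simpa [mul_assoc] using hpoly.exp.const_mul C

theorem hasDerivAt_deriv_exp_quadratic (C N q p : ℝ) :
    HasDerivAt (fun t => C * Real.exp (N * (q + 2 * t * p + t ^ 2)) * (N * (2 * p + 2 * t)))
      (C * Real.exp (N * q) * (2 * N + 4 * N ^ 2 * p ^ 2)) 0 := by
  have hlin : HasDerivAt (fun t : ℝ => N * (2 * p + 2 * t)) (N * 2) 0 := by
    simpa using (((hasDerivAt_id (0 : ℝ)).const_mul 2).const_add (2 * p)).const_mul N
  refine ((hasDerivAt_exp_quadratic C N q p 0).mul hlin).congr_deriv ?_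
  simp only [mul_zero, zero_mul, add_zero, ne_eq, OfNat.ofNat_ne_zero, not_false_eq_true, zero_pow]
  ring

theorem norm_add_smul_single_sq {d : ℕ} (x : EuclideanSpace ℝ (Fin d)) (i : Fin d) (t : ℝ) :
    ‖x + t • EuclideanSpace.single i (1 : ℝ)‖ ^ 2 = ‖x‖ ^ 2 + 2 * t * x i + t ^ 2 := by
  rw [norm_add_sq_real, inner_smul_right, EuclideanSpace.inner_single_right, norm_smul]
  simp
  ring

/-- If `u` minus the Gaussian barrier `C * exp (N * (‖y‖ ^ 2 - R))` has a local minimum at `x`,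
then `Δu(x)` is at least the Laplacian of the barrier at `x`. -/
theorem lap_ge_of_isLocalMin_sub_barrier {d : ℕ} {u : EuclideanSpace ℝ (Fin d) → ℝ}
    {x : EuclideanSpace ℝ (Fin d)} {C N R : ℝ} (hu : ContDiffAt ℝ 2 u x)
    (hmin : IsLocalMin (fun y => u y - C * Real.exp (N * (‖y‖ ^ 2 - R))) x) :
    ∑ i, C * Real.exp (N * (‖x‖ ^ 2 - R)) * (2 * N + 4 * N ^ 2 * x i ^ 2) ≤ lap d u x := by
  refine Finset.sum_le_sum fun i _ => ?_
  set e : EuclideanSpace ℝ (Fin d) := EuclideanSpace.single i 1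
  have hbar (t : ℝ) : C * Real.exp (N * (‖x + t • e‖ ^ 2 - R)) =
      C * Real.exp (N * (‖x‖ ^ 2 - R + 2 * t * x i + t ^ 2)) := by
    rw [norm_add_smul_single_sq]
    ring_nf
  have hline : IsLocalMin (fun t : ℝ => u (x + t • e) -
      C * Real.exp (N * (‖x‖ ^ 2 - R + 2 * t * x i + t ^ 2))) 0 := by
    filter_upwards [(tendsto_add_smul_nhds_zero x e).eventually hmin] with t ht
    rw [hbar t] at ht
    simpa using ht
  refine sub_nonneg.mp (hline.second_derivative_nonneg ?_
    ((hu.hasDerivAt_fderiv_line e).sub (hasDerivAt_deriv_exp_quadratic C N _ _)))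
  filter_upwards [hu.eventually_hasDerivAt_line e] with t ht
  exact ht.sub (hasDerivAt_exp_quadratic C N _ _ t)

/-- The barrier `a * exp (N * (‖y‖ ^ 2 - R))` lies below every solution with boundary values at
least `a`, when `N` exceeds the potential and `‖y‖ ^ 2 ≤ R` on the closure. -/
theorem IsSolutionSchrBVP.barrier_le {d : ℕ} (hd : 1 ≤ d) {O : Set (EuclideanSpace ℝ (Fin d))}
    (hOopen : IsOpen O) (hObdd : Bornology.IsBounded O) {f g u : EuclideanSpace ℝ (Fin d) → ℝ}
    (hsol : IsSolutionSchrBVP d O f g u) {a N R : ℝ} (ha : 0 < a) (hf : ∀ x ∈ O, 0 ≤ f x)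
    (hN : ∀ x ∈ O, f x < N) (hR : ∀ x ∈ closure O, ‖x‖ ^ 2 ≤ R)
    (hg : ∀ x ∈ frontier O, a ≤ g x) {x : EuclideanSpace ℝ (Fin d)} (hx : x ∈ O) :
    a * Real.exp (N * (‖x‖ ^ 2 - R)) ≤ u x := by
  obtain ⟨hC2, hcont, hpde, hbdy⟩ := hsol
  obtain ⟨z, hz, hzmin⟩ := hObdd.isCompact_closure.exists_isMinOn ⟨x, subset_closure hx⟩
    (hcont.sub (g := fun y => a * Real.exp (N * (‖y‖ ^ 2 - R))) (by fun_prop))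
  have hN0 : 0 < N := (hf x hx).trans_lt (hN x hx)
  have hle : u z - a * Real.exp (N * (‖z‖ ^ 2 - R)) ≤ u x - a * Real.exp (N * (‖x‖ ^ 2 - R)) :=
    hzmin (subset_closure hx)
  suffices 0 ≤ u z - a * Real.exp (N * (‖z‖ ^ 2 - R)) by linarith
  by_cases hzO : z ∈ O
  · by_contra! hneg
    have hlap := lap_ge_of_isLocalMin_sub_barrier (hC2.contDiffAt (hOopen.mem_nhds hzO))
      (hzmin.isLocalMin (mem_of_superset (hOopen.mem_nhds hzO) subset_closure))
    set v := a * Real.exp (N * (‖z‖ ^ 2 - R))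
    have hv : 0 < v := by positivity
    have hsum : 2 * N * v ≤ ∑ i, v * (2 * N + 4 * N ^ 2 * z i ^ 2) := by
      refine le_trans ?_ (Finset.single_le_sum
        (f := fun i => v * (2 * N + 4 * N ^ 2 * z i ^ 2)) (fun i _ => by positivity)
        (Finset.mem_univ (⟨0, hd⟩ : Fin d)))
      rw [mul_comm]
      exact mul_le_mul_of_nonneg_left (le_add_of_nonneg_right (by positivity)) hv.le
    have h₁ : f z * v < N * v := mul_lt_mul_of_pos_right (hN z hzO) hv
    have h₂ : f z * u z ≤ f z * v := mul_le_mul_of_nonneg_left (by linarith) (hf z hzO)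
    linarith [hpde z hzO]
  · have hzfr : z ∈ frontier O := by rw [hOopen.frontier_eq]; exact ⟨hz, hzO⟩
    have hexp : Real.exp (N * (‖z‖ ^ 2 - R)) ≤ 1 :=
      Real.exp_le_one_iff.mpr (mul_nonpos_of_nonneg_of_nonpos hN0.le (by linarith [hR z hz]))
    have := mul_le_of_le_one_right ha.le hexp
    linarith [hbdy z hzfr, hg z hzfr]

theorem schrodinger_solution_positive_lower_bound (d : ℕ) (hd : 1 ≤ d)
    (O : Set (EuclideanSpace ℝ (Fin d))) (hOopen : IsOpen O)
    (hObdd : Bornology.IsBounded O) (hOne : O.Nonempty)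
    (hOsm : HasSmoothBoundary d O) :
    ∃ c : ℝ, 0 < c ∧
      ∀ f : EuclideanSpace ℝ (Fin d) → ℝ, ContinuousOn f (closure O) →
        (∃ M : ℝ, ∀ x ∈ closure O, |f x| ≤ M) → (∀ x ∈ closure O, 0 ≤ f x) →
      ∀ gmin : ℝ, 0 < gmin →
      ∀ g : EuclideanSpace ℝ (Fin d) → ℝ, ContinuousOn g (frontier O) →
        (∀ x ∈ frontier O, gmin ≤ g x) →
      ∀ u : EuclideanSpace ℝ (Fin d) → ℝ, IsSolutionSchrBVP d O f g u →
        ∀ x ∈ O,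
          gmin * Real.exp (-(c * sSup ((fun y => |f y|) '' O))) ≤ u x ∧ 0 < u x := by
  obtain ⟨r, hr⟩ := hObdd.closure.exists_norm_le
  have hR (x) (hx : x ∈ closure O) : ‖x‖ ^ 2 ≤ r ^ 2 + 1 := by
    have := pow_le_pow_left₀ (norm_nonneg x) (hr x hx) 2
    linarith
  refine ⟨r ^ 2 + 1, by positivity, ?_⟩
  intro f _ ⟨M, hM⟩ hf a ha g _ hg u hu x hx
  set S := sSup ((fun y => |f y|) '' O)
  have hS (y) (hy : y ∈ O) : f y ≤ S :=
    (le_abs_self _).trans (le_csSup ⟨M, by rintro _ ⟨y, hy, rfl⟩; exact hM y (subset_closure hy)⟩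
      ⟨y, hy, rfl⟩)
  have hS0 : 0 ≤ S := (hf x (subset_closure hx)).trans (hS x hx)
  have hbound (N : ℝ) (hN : S < N) : a * Real.exp (-((r ^ 2 + 1) * N)) ≤ u x := by
    refine le_trans ?_ (hu.barrier_le hd hOopen hObdd ha (fun y hy => hf y (subset_closure hy))
      (fun y hy => (hS y hy).trans_lt hN) hR hg hx)
    gcongr
    nlinarith [mul_nonneg (hS0.trans hN.le) (sq_nonneg ‖x‖)]
  have hlim : a * Real.exp (-((r ^ 2 + 1) * S)) ≤ u x := by
    have hcont : Continuous fun N => a * Real.exp (-((r ^ 2 + 1) * N)) := by fun_prop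
    exact le_of_tendsto (hcont.continuousAt.tendsto.mono_left nhdsWithin_le_nhds)
      (eventually_mem_nhdsWithin.mono hbound : ∀ᶠ N in 𝓝[>] S, _)
  exact ⟨hlim, (by positivity : 0 < a * Real.exp (-((r ^ 2 + 1) * S))).trans_le hlim⟩
end
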